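/- The double series Σ_{p,q≥0} z_{p,q}·u^p·v^q converges absolutely (i.e. Σ_{p,q≥0} z_{p,q}·|u|^p·|v|^q < ∞) if and only if |u| ≤ u_c and |v| ≤ u_c. -/

import Mathlib

noncomputable def nuc : ℝ := 1 + 2 * Real.sqrt 7

noncomputable def tc : ℝ := Real.sqrt 10 / (8 * (7 + Real.sqrt 7) ^ ((3:ℝ)/2))

noncomputable def uc : ℝ := (6/5) * (7 + Real.sqrt 7) * tc

/-- The rational parametrization `û` of the `u`-variable. -/
noncomputable def uhat (H : ℂ) : ℂ :=
  ((uc : ℂ) / 3) * H * (10 - 12 * H + 6 * H ^ 2 - H ^ 3)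

/-- The rational parametrization `Ẑ₀`. -/
noncomputable def Z0hat (H : ℂ) : ℂ :=
  (1/10) * (1 - (1 - (Real.sqrt 7 : ℂ)) * H + 3 * H ^ 2 - H ^ 3)
    * (10 - 12 * H + 6 * H ^ 2 - H ^ 3)

/-- The rational parametrization `Ẑ₁`. -/
noncomputable def Z1hat (H : ℂ) : ℂ :=
  (3 / (10 * (uc : ℂ))) *
    ((Real.sqrt 7 : ℂ) - 1 + H - 3 * (4 - 3 * H + H ^ 2) / (10 - 12 * H + 6 * H ^ 2 - H ^ 3))

/-- The rational parametrization `Â`. -/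
noncomputable def Ahat (H : ℂ) : ℂ :=
  (1/10) * ((((3:ℝ)/2) ^ ((7:ℝ)/3) : ℝ) : ℂ) * (9 - 8 * H + 3 * H ^ 2) / (3 - 3 * H + H ^ 2) ^ 2

open Filter Topology Set

/-- The sum of a real power series. -/
noncomputable def seriesSum (a : ℕ → ℝ) (u : ℝ) : ℝ := ∑' n, a n * u ^ n

/-- The Taylor coefficients at `x` of the power series with coefficients `a`. -/
noncomputable def shiftedCoeff (a : ℕ → ℝ) (x : ℝ) (k : ℕ) : ℝ :=
  ∑' n, a n * (x ^ (n - k) * n.choose k)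

theorem hasSum_binomial (a x t : ℝ) (n : ℕ) :
    HasSum (fun k : ℕ => a * (x ^ (n - k) * n.choose k) * t ^ k) (a * (x + t) ^ n) := by
  have h : a * (x + t) ^ n
      = ∑ k ∈ Finset.range (n + 1), a * (x ^ (n - k) * n.choose k) * t ^ k := by
    rw [add_comm x t, add_pow, Finset.mul_sum]
    refine Finset.sum_congr rfl fun k _ => ?_
    ring
  rw [h]
  refine hasSum_sum_of_ne_finset_zero fun k hk => ?_
  have : n < k := by simpa using hk
  simp [Nat.choose_eq_zero_of_lt this]

theorem summable_of_le_radius {a : ℕ → ℝ} (ha : ∀ n, 0 ≤ a n) {u r : ℝ} (hu : 0 ≤ u) (hur : u ≤ r)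
    (hr : Summable fun n => a n * r ^ n) : Summable fun n => a n * u ^ n :=
  hr.of_nonneg_of_le (fun n => mul_nonneg (ha n) (pow_nonneg hu n)) fun n =>
    mul_le_mul_of_nonneg_left (pow_le_pow_left₀ hu hur n) (ha n)

theorem summable_binomial {a : ℕ → ℝ} (ha : ∀ n, 0 ≤ a n) {x t : ℝ} (hx : 0 ≤ x)
    (hs : Summable fun n => a n * (x + |t|) ^ n) :
    Summable fun nk : ℕ × ℕ => a nk.1 * (x ^ (nk.1 - nk.2) * nk.1.choose nk.2) * t ^ nk.2 := by
  refine Summable.of_norm ?_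
  have hnorm : (fun nk : ℕ × ℕ => ‖a nk.1 * (x ^ (nk.1 - nk.2) * nk.1.choose nk.2) * t ^ nk.2‖)
      = fun nk : ℕ × ℕ => a nk.1 * (x ^ (nk.1 - nk.2) * nk.1.choose nk.2) * |t| ^ nk.2 := by
    funext nk
    rw [norm_mul, Real.norm_eq_abs, Real.norm_eq_abs, abs_pow,
      abs_of_nonneg (mul_nonneg (ha _) (by positivity))]
  rw [hnorm, summable_prod_of_nonneg fun nk => by have := ha nk.1; positivity]
  refine ⟨fun n => (hasSum_binomial (a n) x |t| n).summable, ?_⟩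
  simpa only [(hasSum_binomial (a _) x |t| _).tsum_eq] using hs

theorem hasSum_shiftedCoeff {a : ℕ → ℝ} (ha : ∀ n, 0 ≤ a n) {x t : ℝ} (hx : 0 ≤ x)
    (hs : Summable fun n => a n * (x + |t|) ^ n) :
    HasSum (fun k => shiftedCoeff a x k * t ^ k) (seriesSum a (x + t)) := by
  have hsum := summable_binomial ha hx hs
  have h1 := hsum.hasSum.prod_fiberwise fun n => hasSum_binomial (a n) x t n
  have h2 : HasSum (fun kn : ℕ × ℕ => a kn.2 * (x ^ (kn.2 - kn.1) * kn.2.choose kn.1) * t ^ kn.1) _ :=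
    ((Equiv.prodComm ℕ ℕ).hasSum_iff.mpr hsum.hasSum)
  have h3 := h2.prod_fiberwise fun k => (h2.summable.prod_factor k).hasSum
  simp only [tsum_mul_right] at h3
  rwa [← h1.tsum_eq] at h3

theorem hasFPowerSeriesAt_seriesSum {a : ℕ → ℝ} (ha : ∀ n, 0 ≤ a n) {x r : ℝ} (hx : 0 ≤ x)
    (hxr : x < r) (hs : Summable fun n => a n * r ^ n) :
    HasFPowerSeriesAt (seriesSum a)
      (FormalMultilinearSeries.ofScalars ℝ (shiftedCoeff a x)) x := by
  rw [hasFPowerSeriesAt_iff]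
  have hball : ∀ᶠ t : ℝ in 𝓝 0, |t| < r - x := by
    have := Metric.ball_mem_nhds (0 : ℝ) (sub_pos.mpr hxr)
    filter_upwards [this] with t ht
    simpa using ht
  filter_upwards [hball] with t ht
  have := hasSum_shiftedCoeff ha hx (t := t)
    (summable_of_le_radius ha (by positivity) (by linarith) hs)
  simpa [FormalMultilinearSeries.coeff_ofScalars, mul_comm] using this

theorem analyticAt_seriesSum {a : ℕ → ℝ} (ha : ∀ n, 0 ≤ a n) {x r : ℝ} (hx : 0 ≤ x)
    (hxr : x < r) (hs : Summable fun n => a n * r ^ n) : AnalyticAt ℝ (seriesSum a) x :=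
  (hasFPowerSeriesAt_seriesSum ha hx hxr hs).analyticAt

/-- Pringsheim's theorem: the sum of a power series with nonnegative coefficients does not continue
analytically through the positive point of its circle of convergence. -/
theorem exists_summable_gt_of_analyticAt {a : ℕ → ℝ} (ha : ∀ n, 0 ≤ a n) {r : ℝ} (hr : 0 < r)
    (hs : ∀ u, 0 ≤ u → u < r → Summable fun n => a n * u ^ n) {g : ℝ → ℝ} (hg : AnalyticAt ℝ g r)
    (hfg : ∀ᶠ u in 𝓝[<] r, g u = seriesSum a u) :
    ∃ r', r < r' ∧ Summable fun n => a n * r' ^ n := by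
  obtain ⟨p, R, hp⟩ := hg
  obtain ⟨b, hb, hbr⟩ := (mem_nhdsLT_iff_exists_Ioo_subset).mp hfg
  rw [mem_Iio] at hb
  obtain ⟨d, hd0, hdR⟩ := ENNReal.lt_iff_exists_nnreal_btwn.mp hp.r_pos
  have hd0 : 0 < (d : ℝ) := by exact_mod_cast hd0
  set δ : ℝ := min d (min r (r - b)) with hδ
  have hδ0 : 0 < δ := lt_min hd0 (lt_min hr (sub_pos.mpr hb))
  have hδd : δ ≤ d := min_le_left _ _
  have hδr : δ ≤ r := (min_le_right _ _).trans (min_le_left _ _)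
  have hδb : δ ≤ r - b := (min_le_right _ _).trans (min_le_right _ _)
  have hpd : HasFPowerSeriesOnBall g p r d := hp.mono (by exact_mod_cast hd0) hdR.le
  have hy : ‖-(δ / 4)‖₊ < d := by
    rw [← NNReal.coe_lt_coe, coe_nnnorm, norm_neg, Real.norm_eq_abs, abs_of_pos (by positivity)]
    linarith
  have hq := hpd.changeOrigin (y := -(δ / 4)) (by exact_mod_cast hy)
  have hx0 : 0 ≤ r + -(δ / 4) := by linarith
  have hf := hasFPowerSeriesAt_seriesSum ha hx0 (r := r - δ / 8) (by linarith)
    (hs _ (by linarith) (by linarith))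
  have hev : g =ᶠ[𝓝 (r + -(δ / 4))] seriesSum a := by
    filter_upwards [Ioo_mem_nhds (show b < r + -(δ / 4) by linarith)
      (show r + -(δ / 4) < r by linarith)] with u hu using hbr hu
  have hcoeff := hq.hasFPowerSeriesAt.eq_formalMultilinearSeries_of_eventually hf hev
  have hsum := hq.hasSum (y := δ / 2) (by
    rw [Metric.mem_eball, edist_zero_right, enorm_eq_nnnorm, ← ENNReal.coe_sub, ENNReal.coe_lt_coe,
      ← NNReal.coe_lt_coe, NNReal.coe_sub hy.le, coe_nnnorm, coe_nnnorm, norm_neg,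
      Real.norm_eq_abs, Real.norm_eq_abs, abs_of_pos (by positivity), abs_of_pos (by positivity)]
    linarith)
  rw [hcoeff] at hsum
  have hS : Summable fun k => shiftedCoeff a (r + -(δ / 4)) k * (δ / 2) ^ k := by
    simpa [FormalMultilinearSeries.coeff_ofScalars, mul_comm, div_pow] using hsum.summable
  refine ⟨r + -(δ / 4) + δ / 2, by linarith, ?_⟩
  have hterm : ∀ k, Summable fun n : ℕ =>
      a n * ((r + -(δ / 4)) ^ (n - k) * n.choose k) * (δ / 2) ^ k := by
    intro k
    have h := summable_binomial ha hx0 (t := δ / 8)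
      (hs _ (by positivity) (by rw [abs_of_pos (by positivity)]; linarith))
    have h := ((Equiv.prodComm ℕ ℕ).summable_iff.mpr h).prod_factor k
    have h := (h.mul_right (((δ / 8) ^ k)⁻¹)).mul_right ((δ / 2) ^ k)
    refine h.congr fun n => ?_
    simp only [Function.comp, Equiv.prodComm_apply, Prod.swap]
    field_simp
  have hnn : ∀ n k : ℕ, 0 ≤ a n * ((r + -(δ / 4)) ^ (n - k) * n.choose k) * (δ / 2) ^ k :=
    fun n k => by have := ha n; positivity
  have hprod : Summable fun kn : ℕ × ℕ =>
      a kn.2 * ((r + -(δ / 4)) ^ (kn.2 - kn.1) * kn.2.choose kn.1) * (δ / 2) ^ kn.1 := by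
    rw [summable_prod_of_nonneg fun kn => hnn _ _]
    exact ⟨hterm, by simpa only [tsum_mul_right, shiftedCoeff] using hS⟩
  have hprod' := ((Equiv.prodComm ℕ ℕ).summable_iff.mpr hprod).prod
  simp only [Function.comp, Equiv.prodComm_apply, Prod.swap] at hprod'
  simpa only [(hasSum_binomial (a _) _ _ _).tsum_eq] using hprod'

/-- Summation of a nonnegative double series at a positive point, one variable at a time. -/
theorem hasSum_double_iff {z : ℕ → ℕ → ℝ} (hz : ∀ p q, 0 ≤ z p q) {u v S : ℝ} (hu : 0 < u)
    (hv : 0 ≤ v) :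
    HasSum (fun pq : ℕ × ℕ => z pq.1 pq.2 * u ^ pq.1 * v ^ pq.2) S ↔
      (∀ p, Summable fun q => z p q * v ^ q) ∧ HasSum (fun p => (∑' q, z p q * v ^ q) * u ^ p) S := by
  have hcomm : ∀ p q, z p q * u ^ p * v ^ q = z p q * v ^ q * u ^ p := fun p q => by ring
  simp only [hcomm]
  constructor
  · intro h
    have hp : ∀ p, Summable fun q => z p q * v ^ q := fun p => by
      refine ((h.summable.prod_factor p).mul_right ((u ^ p)⁻¹)).congr fun q => ?_
      field_simp
    exact ⟨hp, h.prod_fiberwise fun p => (hp p).hasSum.mul_right _⟩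
  · rintro ⟨hp, h⟩
    have hnn : 0 ≤ fun pq : ℕ × ℕ => z pq.1 pq.2 * v ^ pq.2 * u ^ pq.1 := fun pq =>
      mul_nonneg (mul_nonneg (hz _ _) (pow_nonneg hv _)) (pow_nonneg hu.le _)
    have hs : Summable fun pq : ℕ × ℕ => z pq.1 pq.2 * v ^ pq.2 * u ^ pq.1 :=
      (summable_prod_of_nonneg hnn).mpr ⟨fun p => (hp p).mul_right (u ^ p),
        h.summable.congr fun p => tsum_mul_right.symm⟩
    have := hs.hasSum.prod_fiberwise fun p => (hp p).hasSum.mul_right (u ^ p)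
    rw [h.unique this]
    exact hs.hasSum

/-- If a power series with nonnegative coefficients agrees near `0` with a function that is analytic
along a positive interval in a parameter `φ`, then it converges to it all along the interval. -/
theorem hasSum_of_analytic_parametrization {a : ℕ → ℝ} (ha : ∀ n, 0 ≤ a n) {φ R : ℝ → ℝ}
    (hφ : ∀ h ∈ Ioo (0 : ℝ) 1, AnalyticAt ℝ φ h) (hφ' : ∀ h ∈ Ioo (0 : ℝ) 1, deriv φ h ≠ 0)
    (hφpos : ∀ h ∈ Ioo (0 : ℝ) 1, 0 < φ h) (hmono : StrictMonoOn φ (Ioo 0 1))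
    (hR : ∀ h ∈ Ioo (0 : ℝ) 1, AnalyticAt ℝ R h) {ε : ℝ} (hε : 0 < ε) (hε1 : ε < 1)
    (hsum : ∀ h ∈ Ioo (0 : ℝ) ε, HasSum (fun n => a n * φ h ^ n) (R h)) :
    ∀ h ∈ Ioo (0 : ℝ) 1, HasSum (fun n => a n * φ h ^ n) (R h) := by
  have identity : ∀ c, ε ≤ c → c ≤ 1 → (∀ h ∈ Ioo (0 : ℝ) c, Summable fun n => a n * φ h ^ n) →
      ∀ h ∈ Ioo (0 : ℝ) c, seriesSum a (φ h) = R h := by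
    intro c hεc hc1 hs
    have hsub : Ioo (0 : ℝ) c ⊆ Ioo 0 1 := Ioo_subset_Ioo_right hc1
    have hA : AnalyticOnNhd ℝ (seriesSum a ∘ φ) (Ioo 0 c) := fun h hh => by
      obtain ⟨k, hk, hkc⟩ := exists_between hh.2
      have hk' : k ∈ Ioo (0 : ℝ) c := ⟨hh.1.trans hk, hkc⟩
      exact (analyticAt_seriesSum ha (hφpos h (hsub hh)).le (hmono (hsub hh) (hsub hk') hk)
        (hs k hk')).comp (hφ h (hsub hh))
    refine hA.eqOn_of_preconnected_of_eventuallyEq (fun h hh => hR h (hsub hh)) isPreconnected_Ioo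
      (z₀ := ε / 2) ⟨by linarith, by linarith⟩ ?_
    filter_upwards [Ioo_mem_nhds (half_pos hε) (half_lt_self hε)] with h hh
    exact (hsum h hh).tsum_eq
  suffices hall : ∀ h ∈ Ioo (0 : ℝ) 1, Summable fun n => a n * φ h ^ n by
    intro h hh
    rw [← identity 1 hε1.le le_rfl hall h hh]
    exact (hall h hh).hasSum
  by_contra! hcon
  obtain ⟨h₁, hh₁, hns⟩ := hcon
  set T : Set ℝ := {h | h ∈ Ioo (0 : ℝ) 1 ∧ Summable fun n => a n * φ h ^ n} with hT
  have hdown : ∀ h ∈ T, ∀ k, 0 < k → k ≤ h → k ∈ T := fun h hh k hk hkh => by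
    have hk' : k ∈ Ioo (0 : ℝ) 1 := ⟨hk, hkh.trans_lt hh.1.2⟩
    exact ⟨hk', summable_of_le_radius ha (hφpos k hk').le (hmono.monotoneOn hk' hh.1 hkh) hh.2⟩
  have hbdd : ∀ h ∈ T, h ≤ h₁ := fun h hh => by
    by_contra! hlt
    exact hns (hdown h hh h₁ hh₁.1 hlt.le).2
  have hεT : ∀ h ∈ Ioo (0 : ℝ) ε, h ∈ T := fun h hh =>
    ⟨⟨hh.1, hh.2.trans hε1⟩, (hsum h hh).summable⟩
  have hTne : T.Nonempty := ⟨ε / 2, hεT _ ⟨by linarith, by linarith⟩⟩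
  have hTbdd : BddAbove T := ⟨h₁, hbdd⟩
  set c := sSup T with hc
  have hεc : ε ≤ c := by
    by_contra! hlt
    have hc0 : 0 < c :=
      (half_pos hε).trans_le (le_csSup hTbdd (hεT _ ⟨by linarith, by linarith⟩))
    obtain ⟨k, hk, hkε⟩ := exists_between hlt
    exact absurd (le_csSup hTbdd (hεT k ⟨hc0.trans hk, hkε⟩)) (not_le.mpr hk)
  have hc1 : c < 1 := (csSup_le hTne hbdd).trans_lt hh₁.2
  have hcI : c ∈ Ioo (0 : ℝ) 1 := ⟨hε.trans_le hεc, hc1⟩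
  have hbelow : ∀ h ∈ Ioo (0 : ℝ) c, h ∈ T := fun h hh => by
    obtain ⟨k, hk, hhk⟩ := exists_lt_of_lt_csSup hTne hh.2
    exact hdown k hk h hh.1 hhk.le
  have hid := identity c hεc hc1.le fun h hh => (hbelow h hh).2
  have hstrict := (hφ c hcI).hasStrictDerivAt
  set ψ := hstrict.localInverse φ _ c (hφ' c hcI) with hψ
  have hψan : AnalyticAt ℝ ψ (φ c) := (hφ c hcI).analyticAt_localInverse (hφ' c hcI)
  have hψc : ψ (φ c) = c := HasStrictFDerivAt.localInverse_apply_image ..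
  have hright : ∀ᶠ u in 𝓝 (φ c), φ (ψ u) = u := HasStrictDerivAt.eventually_right_inverse ..
  have hψI : ∀ᶠ u in 𝓝 (φ c), ψ u ∈ Ioo (0 : ℝ) 1 := by
    refine hψan.continuousAt.eventually_mem ?_
    rw [hψc]
    exact Ioo_mem_nhds hcI.1 hcI.2
  have hleft : ∀ᶠ u in 𝓝[<] φ c, ψ u ∈ Ioo (0 : ℝ) c ∧ φ (ψ u) = u := by
    filter_upwards [nhdsWithin_le_nhds hright, nhdsWithin_le_nhds hψI, self_mem_nhdsWithin]
      with u hu huI hlt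
    refine ⟨⟨huI.1, ?_⟩, hu⟩
    rw [← hmono.lt_iff_lt huI hcI, hu]
    exact hlt
  have hsle : ∀ u, 0 ≤ u → u < φ c → Summable fun n => a n * u ^ n := by
    intro u hu huc
    obtain ⟨w, ⟨hwI, hw⟩, huw⟩ := (hleft.and
      (Ioo_mem_nhdsLT huc)).exists
    refine summable_of_le_radius ha hu (hw.symm ▸ huw.1.le) (hbelow _ hwI).2
  obtain ⟨r', hr', hsr'⟩ := exists_summable_gt_of_analyticAt ha (hφpos c hcI) hsle
    (g := R ∘ ψ) (AnalyticAt.comp (by rw [hψc]; exact hR c hcI) hψan) (by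
      filter_upwards [hleft] with u hu
      rw [Function.comp, ← hid _ hu.1, hu.2])
  have hnear : ∀ᶠ h in 𝓝[>] c, φ h < r' ∧ h ∈ Ioo (0 : ℝ) 1 :=
    nhdsWithin_le_nhds (((hφ c hcI).continuousAt.eventually_lt continuousAt_const hr').and
      (Ioo_mem_nhds hcI.1 hcI.2))
  obtain ⟨h, ⟨hlt, hI⟩, hgt⟩ := (hnear.and self_mem_nhdsWithin).exists
  have : h ∈ T := ⟨hI, summable_of_le_radius ha (hφpos h hI).le hlt.le hsr'⟩
  exact absurd (le_csSup hTbdd this) (not_le.mpr hgt)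

/-- The real version of `uhat`. -/
noncomputable def uReal (h : ℝ) : ℝ := (uc / 3) * h * (10 - 12 * h + 6 * h ^ 2 - h ^ 3)

/-- The real version of `Z0hat`. -/
noncomputable def Z0Real (h : ℝ) : ℝ :=
  (1/10) * (1 - (1 - Real.sqrt 7) * h + 3 * h ^ 2 - h ^ 3) * (10 - 12 * h + 6 * h ^ 2 - h ^ 3)

/-- The real version of `Z1hat`. -/
noncomputable def Z1Real (h : ℝ) : ℝ :=
  (3 / (10 * uc)) *
    (Real.sqrt 7 - 1 + h - 3 * (4 - 3 * h + h ^ 2) / (10 - 12 * h + 6 * h ^ 2 - h ^ 3))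

theorem uhat_ofReal (h : ℝ) : uhat h = (uReal h : ℂ) := by
  simp only [uhat, uReal]; push_cast; ring

theorem Z0hat_ofReal (h : ℝ) : Z0hat h = (Z0Real h : ℂ) := by
  simp only [Z0hat, Z0Real]; push_cast; ring

theorem Z1hat_ofReal (h : ℝ) : Z1hat h = (Z1Real h : ℂ) := by
  simp only [Z1hat, Z1Real]; push_cast; ring

/-- Numerator in the rational parametrization of `Z`, in the variables `x = 1 - H`, `y = 1 - K`. -/
def numPoly (x y : ℝ) : ℝ :=
  3 * x + 3 * y + 6 * x ^ 2 + 6 * x * y + 3 * y ^ 2 + 9 * x ^ 3 + 9 * x ^ 2 * y + 6 * x * y ^ 2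
    + 3 * y ^ 3 + 13 * x ^ 4 + 13 * x ^ 3 * y + 9 * x ^ 2 * y ^ 2 + 6 * x * y ^ 3 + 3 * y ^ 4
    + 13 * x ^ 5 + 13 * x ^ 4 * y + 13 * x ^ 3 * y ^ 2 + 9 * x ^ 2 * y ^ 3 + 3 * x * y ^ 4
    + 10 * x ^ 6 + 10 * x ^ 5 * y + 13 * x ^ 4 * y ^ 2 + 7 * x ^ 3 * y ^ 3 + 3 * x ^ 2 * y ^ 4
    + 5 * x ^ 7 + 5 * x ^ 6 * y + 10 * x ^ 5 * y ^ 2 + 4 * x ^ 4 * y ^ 3 + x ^ 3 * y ^ 4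
    + x ^ 8 + x ^ 7 * y + 5 * x ^ 6 * y ^ 2 + x ^ 5 * y ^ 3 + x ^ 7 * y ^ 2

/-- Denominator in the rational parametrization of `Z`, in the variables `x = 1 - H`,
`y = 1 - K`. -/
def denPoly (x y : ℝ) : ℝ :=
  x + y + x ^ 2 + x * y + y ^ 2 + x ^ 3 + x ^ 2 * y + x * y ^ 2 + y ^ 3 + x ^ 2 * y ^ 2

theorem denPoly_pos {x y : ℝ} (hx : 0 < x) (hy : 0 < y) : 0 < denPoly x y := by
  unfold denPoly; positivity

theorem numPoly_pos {x y : ℝ} (hx : 0 < x) (hy : 0 < y) : 0 < numPoly x y := by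
  unfold numPoly; positivity

/-- The rational parametrization of `Z`. -/
noncomputable def ZReal (H K : ℝ) : ℝ :=
  Z0Real K + Real.sqrt 7 / 10 * (H * (10 - 12 * H + 6 * H ^ 2 - H ^ 3))
    - H * numPoly (1 - H) (1 - K) / (10 * denPoly (1 - H) (1 - K))

theorem sqrt_seven_sq : Real.sqrt 7 ^ 2 = 7 := Real.sq_sqrt (by norm_num)

theorem tc_pos : 0 < tc := by unfold tc; positivity

theorem uc_pos : 0 < uc := by have := tc_pos; unfold uc; positivity

theorem nuc_sq_sub_one_mul_tc : (nuc ^ 2 - 1) * tc = 10 / 3 * uc := by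
  unfold nuc uc
  linear_combination 4 * tc * sqrt_seven_sq

theorem nuc_sq_sub_one_mul_uc_sq : (nuc ^ 2 - 1) * uc ^ 2 = 9 / 10 := by
  have hpos : 0 < 7 + Real.sqrt 7 := by positivity
  have ht : tc ^ 2 * (64 * (7 + Real.sqrt 7) ^ 3) = 10 := by
    have h3 : ((7 + Real.sqrt 7) ^ ((3 : ℝ) / 2)) ^ 2 = (7 + Real.sqrt 7) ^ 3 := by
      rw [← Real.rpow_natCast, ← Real.rpow_mul hpos.le, ← Real.rpow_natCast]
      norm_num
    rw [← h3, tc, div_pow, Real.sq_sqrt (by norm_num)]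
    field_simp
    norm_num
  have hn : nuc ^ 2 - 1 = 4 * (7 + Real.sqrt 7) := by
    unfold nuc
    linear_combination 4 * sqrt_seven_sq
  rw [hn, uc]
  linear_combination (9 / 100) * ht

theorem cubic_pos {h : ℝ} (h2 : h < 2) : 0 < 10 - 12 * h + 6 * h ^ 2 - h ^ 3 := by
  have : 0 < (2 - h) ^ 3 := pow_pos (by linarith) 3
  nlinarith

theorem uReal_mul_Z1Real {K : ℝ} (hK : K < 2) :
    uReal K * Z1Real K = K / 10 * ((10 - 12 * K + 6 * K ^ 2 - K ^ 3) * (Real.sqrt 7 - 1 + K)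
      - 3 * (4 - 3 * K + K ^ 2)) := by
  have hq := (cubic_pos hK).ne'
  have hu := uc_pos.ne'
  unfold uReal Z1Real
  generalize 10 - 12 * K + 6 * K ^ 2 - K ^ 3 = q at hq
  field_simp

theorem kernel_factorization {s H K : ℝ} :
    (1 + 2 * s) * (K * (10 - 12 * K + 6 * K ^ 2 - K ^ 3) / 3)
        * (H * (10 - 12 * H + 6 * H ^ 2 - H ^ 3) / 3)
      - (H * (10 - 12 * H + 6 * H ^ 2 - H ^ 3) / 3) ^ 2
      - 10 / 3 * ((K * (10 - 12 * K + 6 * K ^ 2 - K ^ 3) / 3)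
          * ((1/10) * (1 - (1 - s) * H + 3 * H ^ 2 - H ^ 3) * (10 - 12 * H + 6 * H ^ 2 - H ^ 3))
        + (H * (10 - 12 * H + 6 * H ^ 2 - H ^ 3) / 3)
          * (K / 10 * ((10 - 12 * K + 6 * K ^ 2 - K ^ 3) * (s - 1 + K) - 3 * (4 - 3 * K + K ^ 2))))
    = -((10 - 12 * H + 6 * H ^ 2 - H ^ 3) / 9
        * ((1 - H) ^ 2 - (1 - H) * (1 - K) + (1 - K) ^ 2 - (1 - H) * (1 - K) ^ 2)
        * denPoly (1 - H) (1 - K)) := by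
  unfold denPoly
  ring

theorem rhs_factorization {s H K : ℝ} (hs : s ^ 2 = 7) :
    (H * (10 - 12 * H + 6 * H ^ 2 - H ^ 3) / 3) ^ 2
        * ((1/10) * (1 - (1 - s) * K + 3 * K ^ 2 - K ^ 3) * (10 - 12 * K + 6 * K ^ 2 - K ^ 3)
          - (1/10) * (1 - (1 - s) * H + 3 * H ^ 2 - H ^ 3) * (10 - 12 * H + 6 * H ^ 2 - H ^ 3))
      + 9 / 10 * (H * (10 - 12 * H + 6 * H ^ 2 - H ^ 3) / 3) ^ 3
        * (K * (10 - 12 * K + 6 * K ^ 2 - K ^ 3) / 3)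
      - 10 / 3 * (H * (10 - 12 * H + 6 * H ^ 2 - H ^ 3) / 3)
        * ((1/10) * (1 - (1 - s) * H + 3 * H ^ 2 - H ^ 3) * (10 - 12 * H + 6 * H ^ 2 - H ^ 3))
        * (K / 10 * ((10 - 12 * K + 6 * K ^ 2 - K ^ 3) * (s - 1 + K) - 3 * (4 - 3 * K + K ^ 2)))
    = (10 - 12 * H + 6 * H ^ 2 - H ^ 3) / 9
        * ((1 - H) ^ 2 - (1 - H) * (1 - K) + (1 - K) ^ 2 - (1 - H) * (1 - K) ^ 2)
        * (H * numPoly (1 - H) (1 - K) / 10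
          - denPoly (1 - H) (1 - K) * (s / 10 * (H * (10 - 12 * H + 6 * H ^ 2 - H ^ 3)))) := by
  unfold denPoly numPoly
  linear_combination (-(3 / 10) * (H * (10 - 12 * H + 6 * H ^ 2 - H ^ 3) / 3) ^ 2
    * (K * (10 - 12 * K + 6 * K ^ 2 - K ^ 3) / 3)) * hs

/-- The kernel equation determines `Z` as a rational function of the parameters. -/
theorem eq_ZReal_of_kernel_equation {H K Z : ℝ} (hH : H ∈ Ioo (0 : ℝ) 1) (hK : K ∈ Ioo (0 : ℝ) 1)
    (h : (nuc * uReal K * uReal H - uReal H ^ 2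
          - (nuc ^ 2 - 1) * tc * uReal K * (Z0Real H + uReal H * Z1Real K)) * (Z - Z0Real K)
        = uReal H ^ 2 * (Z0Real K - Z0Real H)
          + (nuc ^ 2 - 1) * uReal H * uReal K * (uReal H ^ 2 - tc * Z0Real H * Z1Real K)) :
    Z = ZReal H K := by
  obtain ⟨hH0, hH1⟩ := hH
  obtain ⟨hK0, hK1⟩ := hK
  have hq := cubic_pos (show H < 2 by linarith)
  have hD := denPoly_pos (sub_pos.mpr hH1) (sub_pos.mpr hK1)
  have hG : 0 < (1 - H) ^ 2 - (1 - H) * (1 - K) + (1 - K) ^ 2 - (1 - H) * (1 - K) ^ 2 := by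
    have : 0 < (1 - H) * (1 - K) * K :=
      mul_pos (mul_pos (sub_pos.mpr hH1) (sub_pos.mpr hK1)) hK0
    nlinarith [sq_nonneg (H - K)]
  have hW := uReal_mul_Z1Real (show K < 2 by linarith)
  set U := H * (10 - 12 * H + 6 * H ^ 2 - H ^ 3) / 3 with hU
  set V := K * (10 - 12 * K + 6 * K ^ 2 - K ^ 3) / 3 with hV
  have huH : uReal H = uc * U := by rw [hU, uReal]; ring
  have huK : uReal K = uc * V := by rw [hV, uReal]; ring
  set W := K / 10 * ((10 - 12 * K + 6 * K ^ 2 - K ^ 3) * (Real.sqrt 7 - 1 + K)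
      - 3 * (4 - 3 * K + K ^ 2)) with hWdef
  have hdiv : ((1 + 2 * Real.sqrt 7) * V * U - U ^ 2 - 10 / 3 * (V * Z0Real H + U * W))
        * (Z - Z0Real K)
      = U ^ 2 * (Z0Real K - Z0Real H) + 9 / 10 * U ^ 3 * V - 10 / 3 * U * Z0Real H * W := by
    have hu2 : uc ^ 2 ≠ 0 := pow_ne_zero 2 uc_pos.ne'
    refine mul_left_cancel₀ hu2 ?_
    have hn : nuc = 1 + 2 * Real.sqrt 7 := rfl
    rw [huK] at hW
    rw [huH, huK] at h
    rw [← hn]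
    linear_combination h
      + (V * Z0Real H * uc * (Z - Z0Real K) + U * W * uc * (Z - Z0Real K)
          - U * uc * Z0Real H * W) * nuc_sq_sub_one_mul_tc
      + ((nuc ^ 2 - 1) * tc * uc * U * (Z - Z0Real K) - (nuc ^ 2 - 1) * tc * uc * U * Z0Real H) * hW
      + uc ^ 2 * U ^ 3 * V * nuc_sq_sub_one_mul_uc_sq
  have hker := kernel_factorization (s := Real.sqrt 7) (H := H) (K := K)
  have hrhs := rhs_factorization (H := H) (K := K) sqrt_seven_sq
  rw [← hU, ← hV, ← hWdef] at hker hrhs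
  change _ - 10 / 3 * (V * Z0Real H + _) = _ at hker
  change U ^ 2 * (Z0Real K - Z0Real H) + _ - 10 / 3 * U * Z0Real H * W = _ at hrhs
  rw [hker, hrhs] at hdiv
  have hc := mul_left_cancel₀ (mul_pos (by positivity :
    0 < (10 - 12 * H + 6 * H ^ 2 - H ^ 3) / 9) hG).ne'
    ((by linear_combination -hdiv :
      (10 - 12 * H + 6 * H ^ 2 - H ^ 3) / 9
        * ((1 - H) ^ 2 - (1 - H) * (1 - K) + (1 - K) ^ 2 - (1 - H) * (1 - K) ^ 2)
        * (denPoly (1 - H) (1 - K) * (Z - Z0Real K)) = _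
        * (denPoly (1 - H) (1 - K) * (Real.sqrt 7 / 10 * (H * (10 - 12 * H + 6 * H ^ 2 - H ^ 3)))
          - H * numPoly (1 - H) (1 - K) / 10)))
  unfold ZReal
  field_simp
  linear_combination 10 * hc

theorem uReal_eq (h : ℝ) : uReal h = uc * (1 - (2 * (1 - h) ^ 3 + (1 - h) ^ 4) / 3) := by
  unfold uReal; ring

theorem analyticAt_uReal (h : ℝ) : AnalyticAt ℝ uReal h := by
  unfold uReal; fun_prop

theorem hasDerivAt_uReal (h : ℝ) :
    HasDerivAt uReal (uc * ((1 - h) ^ 2 * (6 + 4 * (1 - h)) / 3)) h := by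
  have h1 : HasDerivAt (fun h : ℝ => 1 - h) (-1) h := by
    simpa using (hasDerivAt_id h).const_sub 1
  have h2 := (((((h1.pow 3).const_mul 2).add (h1.pow 4)).div_const 3).const_sub 1).const_mul uc
  have h3 := h2.congr_of_eventuallyEq (f₁ := uReal) (Eventually.of_forall fun k => by
    simp only [uReal_eq, Pi.add_apply, Pi.pow_apply])
  refine h3.congr_deriv ?_
  push_cast
  ring

theorem deriv_uReal_pos {h : ℝ} (hh : h ∈ Ioo (0 : ℝ) 1) : 0 < deriv uReal h := by
  rw [(hasDerivAt_uReal h).deriv]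
  have h1 : 0 < 1 - h := sub_pos.mpr hh.2
  have := uc_pos
  positivity

theorem strictMonoOn_uReal : StrictMonoOn uReal (Ioo 0 1) :=
  strictMonoOn_of_deriv_pos (convex_Ioo 0 1)
    (fun h _ => (analyticAt_uReal h).continuousAt.continuousWithinAt)
    fun h hh => deriv_uReal_pos (by rwa [interior_Ioo] at hh)

theorem uReal_pos {h : ℝ} (h0 : 0 < h) (h2 : h < 2) : 0 < uReal h := by
  have := uc_pos
  have := cubic_pos h2
  unfold uReal
  positivity

theorem uReal_le_uc {h : ℝ} (h1 : h ≤ 1) : uReal h ≤ uc := by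
  have hx : 0 ≤ 1 - h := sub_nonneg.mpr h1
  have : 0 ≤ (2 * (1 - h) ^ 3 + (1 - h) ^ 4) / 3 := by positivity
  rw [uReal_eq]
  nlinarith [uc_pos]

theorem analyticAt_Z0Real (h : ℝ) : AnalyticAt ℝ Z0Real h := by
  unfold Z0Real; fun_prop

theorem ten_mul_Z0Real (x : ℝ) : 10 * Z0Real (1 - x) =
    3 * (2 + Real.sqrt 7) * (1 - (2 * x ^ 3 + x ^ 4) / 3) + x ^ 3 * (3 + 3 * x + 3 * x ^ 2 + x ^ 3) := by
  unfold Z0Real; ring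

/-- An analytic function cannot take the value `x³ (3 + 3 x + 3 x² + x³)` at `(2 x³ + x⁴) / 3`
for all small `x`. -/
theorem not_analyticAt_of_branch {φ : ℝ → ℝ}
    (h : ∀ᶠ x in 𝓝 (0 : ℝ), φ ((2 * x ^ 3 + x ^ 4) / 3) = x ^ 3 * (3 + 3 * x + 3 * x ^ 2 + x ^ 3)) :
    ¬ AnalyticAt ℝ φ 0 := by
  intro hφ
  have hφ0 : φ 0 = 0 := by simpa using h.self_of_nhds
  obtain ⟨p, hp⟩ := hφ
  have hψ : DifferentiableAt ℝ (dslope φ 0) 0 :=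
    hp.has_fpower_series_dslope_fslope.analyticAt.differentiableAt
  have hw : HasDerivAt (fun x : ℝ => (2 * x ^ 3 + x ^ 4) / 3) 0 0 := by
    have := (((hasDerivAt_pow 3 (0 : ℝ)).const_mul 2).add (hasDerivAt_pow 4 (0 : ℝ))).div_const 3
    simpa using! this
  have hcomp : HasDerivAt (fun x : ℝ => dslope φ 0 ((2 * x ^ 3 + x ^ 4) / 3)) 0 0 := by
    have h1 : HasDerivAt (dslope φ 0) (deriv (dslope φ 0) 0)
        ((fun x : ℝ => (2 * x ^ 3 + x ^ 4) / 3) 0) := by simpa using hψ.hasDerivAt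
    simpa using! h1.comp (0 : ℝ) hw
  have hA := ((hasDerivAt_id (0 : ℝ)).const_add 2).mul hcomp
  have hB : HasDerivAt (fun x : ℝ => 3 * (3 + 3 * x + 3 * x ^ 2 + x ^ 3)) 9 0 := by
    have := ((((hasDerivAt_id (0 : ℝ)).const_mul 3).const_add 3).add
      ((hasDerivAt_pow 2 (0 : ℝ)).const_mul 3)).add (hasDerivAt_pow 3 (0 : ℝ))
    have := this.const_mul 3
    norm_num at this
    exact this
  have hne : ∀ᶠ x in 𝓝[≠] (0 : ℝ), (2 + x) * dslope φ 0 ((2 * x ^ 3 + x ^ 4) / 3)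
      = 3 * (3 + 3 * x + 3 * x ^ 2 + x ^ 3) := by
    filter_upwards [nhdsWithin_le_nhds h, self_mem_nhdsWithin] with x hx hx0
    have hx0 : x ≠ 0 := hx0
    have hs := sub_smul_dslope φ 0 ((2 * x ^ 3 + x ^ 4) / 3)
    rw [hx, hφ0, sub_zero, sub_zero, smul_eq_mul] at hs
    refine mul_left_cancel₀ (pow_ne_zero 3 hx0) ?_
    linear_combination 3 * hs
  have heq := (hA.continuousAt.eventuallyEq_nhds_iff_eventuallyEq_nhdsNE hB.continuousAt).mp hne
  have h0 := heq.self_of_nhds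
  have h1 := (hA.congr_of_eventuallyEq heq.symm).unique hB
  simp at h0 h1
  linarith

/-- The power series of `Z₀` diverges beyond `u_c`. -/
theorem le_uc_of_summable {a : ℕ → ℝ} (ha : ∀ n, 0 ≤ a n) {ε : ℝ} (hε : 0 < ε) (hε1 : ε < 1)
    (hsum : ∀ h ∈ Ioo (0 : ℝ) ε, HasSum (fun n => a n * uReal h ^ n) (Z0Real h)) {r : ℝ}
    (hr : Summable fun n => a n * r ^ n) : r ≤ uc := by
  by_contra! hlt
  have hev : ∀ᶠ h in 𝓝 (1 : ℝ), uReal h < r := by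
    refine (analyticAt_uReal 1).continuousAt.eventually_lt continuousAt_const ?_
    exact (uReal_le_uc le_rfl).trans_lt hlt
  obtain ⟨l, c, ⟨hl1, h1c⟩, hsub⟩ := mem_nhds_iff_exists_Ioo_subset.mp hev
  have hbound : ∀ h ∈ Ioo (0 : ℝ) (min c 2), 0 < uReal h ∧ uReal h < r := by
    intro h hh
    refine ⟨uReal_pos hh.1 (hh.2.trans_le (min_le_right _ _)), ?_⟩
    rcases le_total h 1 with h1 | h1
    · exact (uReal_le_uc h1).trans_lt hlt
    · exact hsub ⟨hl1.trans_le h1, hh.2.trans_le (min_le_left _ _)⟩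
  have h1m : 1 < min c 2 := lt_min h1c (by norm_num)
  have hA : AnalyticOnNhd ℝ (seriesSum a ∘ uReal) (Ioo 0 (min c 2)) := fun h hh =>
    (analyticAt_seriesSum ha (hbound h hh).1.le (hbound h hh).2 hr).comp (analyticAt_uReal h)
  have hid : EqOn (seriesSum a ∘ uReal) Z0Real (Ioo 0 (min c 2)) := by
    refine hA.eqOn_of_preconnected_of_eventuallyEq (fun h _ => analyticAt_Z0Real h)
      isPreconnected_Ioo (z₀ := ε / 2) ⟨by linarith, by linarith⟩ ?_
    filter_upwards [Ioo_mem_nhds (half_pos hε) (half_lt_self hε)] with h hh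
    exact (hsum h hh).tsum_eq
  refine not_analyticAt_of_branch (φ := fun w => 10 * seriesSum a (uc * (1 - w))
    - 3 * (2 + Real.sqrt 7) * (1 - w)) ?_ ?_
  · filter_upwards [Ioo_mem_nhds (show 1 - min c 2 < 0 by linarith) (show (0 : ℝ) < 1 by norm_num)]
      with x hx
    have h := hid (show 1 - x ∈ Ioo 0 (min c 2) from ⟨by linarith [hx.2], by linarith [hx.1]⟩)
    rw [Function.comp, uReal_eq, sub_sub_cancel] at h
    rw [h, ten_mul_Z0Real]
    ring
  · have hf : AnalyticAt ℝ (seriesSum a) (uc * (1 - 0)) := by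
      rw [sub_zero, mul_one]
      exact analyticAt_seriesSum ha uc_pos.le hlt hr
    have hin : AnalyticAt ℝ (fun w : ℝ => uc * (1 - w)) 0 := by fun_prop
    have hc : AnalyticAt ℝ (fun w : ℝ => seriesSum a (uc * (1 - w))) 0 :=
      AnalyticAt.fun_comp hf hin
    fun_prop

theorem analyticAt_ZReal_left {K : ℝ} (hK : K < 1) {H : ℝ} (hH : H < 1) :
    AnalyticAt ℝ (fun H => ZReal H K) H := by
  have hD := denPoly_pos (sub_pos.mpr hH) (sub_pos.mpr hK)
  have hD' : 10 * denPoly (1 - H) (1 - K) ≠ 0 := by positivity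
  unfold denPoly at hD'
  unfold ZReal numPoly denPoly
  fun_prop (disch := assumption)

theorem analyticAt_ZReal_right {H : ℝ} (hH : H < 1) {K : ℝ} (hK : K < 1) :
    AnalyticAt ℝ (fun K => ZReal H K) K := by
  have hD := denPoly_pos (sub_pos.mpr hH) (sub_pos.mpr hK)
  have hD' : 10 * denPoly (1 - H) (1 - K) ≠ 0 := by positivity
  unfold denPoly at hD'
  unfold ZReal Z0Real numPoly denPoly
  fun_prop (disch := assumption)

theorem ZReal_le {h : ℝ} (hh : h ∈ Ioo (0 : ℝ) 1) : ZReal h h ≤ 100 := by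
  obtain ⟨h0, h1⟩ := hh
  have hs : Real.sqrt 7 ≤ 3 := Real.sqrt_le_iff.mpr ⟨by norm_num, by norm_num⟩
  have hs0 : 0 ≤ Real.sqrt 7 := Real.sqrt_nonneg 7
  have hN := numPoly_pos (sub_pos.mpr h1) (sub_pos.mpr h1)
  have hD := denPoly_pos (sub_pos.mpr h1) (sub_pos.mpr h1)
  have hfrac : 0 ≤ h * numPoly (1 - h) (1 - h) / (10 * denPoly (1 - h) (1 - h)) := by positivity
  have hq := cubic_pos (show h < 2 by linarith)
  have hsq : h ^ 2 ≤ 1 := pow_le_one₀ h0.le h1.le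
  have hcu : 0 ≤ h ^ 3 := by positivity
  have hq16 : 10 - 12 * h + 6 * h ^ 2 - h ^ 3 ≤ 16 := by linarith
  have hsh : Real.sqrt 7 * h ≤ 3 := by nlinarith
  have hp : 1 - (1 - Real.sqrt 7) * h + 3 * h ^ 2 - h ^ 3 ≤ 7 := by nlinarith
  have hmul := mul_le_mul_of_nonneg_right hp hq.le
  have hlast := mul_le_mul_of_nonneg_right hsh hq.le
  unfold ZReal Z0Real
  nlinarith

/-- The parametrized double series converges to `ZReal` on the whole square `(0, 1)²`, provided it
does so near `(0, 0)`. -/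
theorem hasSum_uReal_of_small {z : ℕ → ℕ → ℝ} (hz : ∀ p q, 0 ≤ z p q) {ε : ℝ} (hε : 0 < ε)
    (hε1 : ε < 1)
    (hsmall : ∀ H ∈ Ioo (0 : ℝ) ε, ∀ K ∈ Ioo (0 : ℝ) ε,
      HasSum (fun pq : ℕ × ℕ => z pq.1 pq.2 * uReal H ^ pq.1 * uReal K ^ pq.2) (ZReal H K)) :
    ∀ H ∈ Ioo (0 : ℝ) 1, ∀ K ∈ Ioo (0 : ℝ) 1,
      HasSum (fun pq : ℕ × ℕ => z pq.1 pq.2 * uReal H ^ pq.1 * uReal K ^ pq.2) (ZReal H K) := by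
  have hpos : ∀ h ∈ Ioo (0 : ℝ) 1, 0 < uReal h := fun h hh =>
    uReal_pos hh.1 (by linarith [hh.2])
  have hder : ∀ h ∈ Ioo (0 : ℝ) 1, deriv uReal h ≠ 0 := fun h hh => (deriv_uReal_pos hh).ne'
  have hsub : Ioo (0 : ℝ) ε ⊆ Ioo 0 1 := Ioo_subset_Ioo_right hε1.le
  have hfirst : ∀ H ∈ Ioo (0 : ℝ) 1, ∀ K ∈ Ioo (0 : ℝ) ε,
      HasSum (fun pq : ℕ × ℕ => z pq.1 pq.2 * uReal H ^ pq.1 * uReal K ^ pq.2) (ZReal H K) := by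
    intro H hH K hK
    have hvK := (hpos K (hsub hK)).le
    have hiff := fun h (hh : h ∈ Ioo (0 : ℝ) 1) =>
      hasSum_double_iff hz (S := ZReal h K) (hpos h hh) hvK
    have hfib := ((hiff (ε / 2) (hsub ⟨by linarith, by linarith⟩)).mp
      (hsmall _ ⟨by linarith, by linarith⟩ K hK)).1
    refine (hiff H hH).mpr ⟨hfib, ?_⟩
    exact hasSum_of_analytic_parametrization (R := fun H => ZReal H K)
      (fun p => tsum_nonneg fun q => mul_nonneg (hz p q) (pow_nonneg hvK q))
      (fun h _ => analyticAt_uReal h) hder hpos strictMonoOn_uReal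
      (fun h hh => analyticAt_ZReal_left (hsub hK).2 hh.2) hε hε1
      (fun h hh => ((hiff h (hsub hh)).mp (hsmall h hh K hK)).2) H hH
  intro H hH K hK
  have huH := (hpos H hH).le
  have hswap : ∀ k, HasSum (fun pq : ℕ × ℕ => z pq.1 pq.2 * uReal H ^ pq.1 * uReal k ^ pq.2)
      (ZReal H k) ↔ HasSum (fun qp : ℕ × ℕ => z qp.2 qp.1 * uReal k ^ qp.1 * uReal H ^ qp.2)
      (ZReal H k) := fun k => by
    rw [← (Equiv.prodComm ℕ ℕ).hasSum_iff]
    simp only [Function.comp_def, Equiv.prodComm_apply, Prod.fst_swap, Prod.snd_swap,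
      mul_right_comm]
  have hiff := fun k (hk : k ∈ Ioo (0 : ℝ) 1) => (hswap k).trans
    (hasSum_double_iff (fun q p => hz p q) (S := ZReal H k) (hpos k hk) huH)
  have hfib := ((hiff (ε / 2) (hsub ⟨by linarith, by linarith⟩)).mp
    (hfirst H hH _ ⟨by linarith, by linarith⟩)).1
  refine (hiff K hK).mpr ⟨hfib, ?_⟩
  exact hasSum_of_analytic_parametrization (R := fun K => ZReal H K)
    (fun q => tsum_nonneg fun p => mul_nonneg (hz p q) (pow_nonneg huH p))
    (fun k _ => analyticAt_uReal k) hder hpos strictMonoOn_uReal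
    (fun k hk => analyticAt_ZReal_right hH.2 hk.2) hε hε1
    (fun k hk => ((hiff k (hsub hk)).mp (hfirst H hH k hk)).2) K hK

/-- Boundedness of `ZReal` on the diagonal gives convergence at the critical point. -/
theorem summable_at_uc {z : ℕ → ℕ → ℝ} (hz : ∀ p q, 0 ≤ z p q)
    (hsum : ∀ H ∈ Ioo (0 : ℝ) 1, ∀ K ∈ Ioo (0 : ℝ) 1,
      HasSum (fun pq : ℕ × ℕ => z pq.1 pq.2 * uReal H ^ pq.1 * uReal K ^ pq.2) (ZReal H K)) :
    Summable fun pq : ℕ × ℕ => z pq.1 pq.2 * uc ^ pq.1 * uc ^ pq.2 := by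
  refine summable_of_sum_le (c := 100) (fun pq => ?_) fun s => ?_
  · exact mul_nonneg (mul_nonneg (hz _ _) (pow_nonneg uc_pos.le _)) (pow_nonneg uc_pos.le _)
  · have hu : Tendsto uReal (𝓝[<] 1) (𝓝 uc) := by
      have h1 : uReal 1 = uc := by rw [uReal_eq]; ring
      have := (analyticAt_uReal 1).continuousAt.tendsto
      rw [h1] at this
      exact this.mono_left nhdsWithin_le_nhds
    have hlim : Tendsto (fun h => ∑ pq ∈ s, z pq.1 pq.2 * uReal h ^ pq.1 * uReal h ^ pq.2) (𝓝[<] 1)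
        (𝓝 (∑ pq ∈ s, z pq.1 pq.2 * uc ^ pq.1 * uc ^ pq.2)) :=
      tendsto_finsetSum _ fun pq _ => ((hu.pow _).const_mul _).mul (hu.pow _)
    refine le_of_tendsto hlim ?_
    filter_upwards [Ioo_mem_nhdsLT (show (0 : ℝ) < 1 by norm_num)] with h hh
    have hpos := (uReal_pos hh.1 (by linarith [hh.2])).le
    exact (sum_le_hasSum s (fun pq _ => mul_nonneg (mul_nonneg (hz _ _) (pow_nonneg hpos _))
      (pow_nonneg hpos _)) (hsum h hh h hh)).trans (ZReal_le hh)

/-- the double series `Σ_{p,q} z_{p,q} u^p v^q` converges absolutely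
if and only if `|u| ≤ u_c` and `|v| ≤ u_c`. -/
theorem statement3
    (ρ : ℝ) (hρ : 0 < ρ)
    (z : ℕ → ℕ → ℝ) (hz_nonneg : ∀ p q, 0 ≤ z p q)
    -- `z p 0` are the Taylor coefficients of `Z₀ = Ẑ₀ ∘ û⁻¹` at `0`
    (hz0 : ∀ H : ℂ, ‖H‖ < ρ →
      HasSum (fun p : ℕ => (z p 0 : ℂ) * uhat H ^ p) (Z0hat H))
    -- `z p q` are the Taylor coefficients at `(0,0)` of the solution `Z(u,v)` of the
    -- algebraic equation, expressed through the parametrization `u = û(H)`, `v = û(K)`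
    (hZ : ∀ H K : ℂ, ‖H‖ < ρ → ‖K‖ < ρ → ∃ ZHK : ℂ,
      HasSum (fun pq : ℕ × ℕ => (z pq.1 pq.2 : ℂ) * uhat H ^ pq.1 * uhat K ^ pq.2) ZHK ∧
      ((nuc : ℂ) * uhat K * uhat H - uhat H ^ 2
          - ((nuc : ℂ) ^ 2 - 1) * (tc : ℂ) * uhat K * (Z0hat H + uhat H * Z1hat K))
          * (ZHK - Z0hat K)
        = uhat H ^ 2 * (Z0hat K - Z0hat H)
          + ((nuc : ℂ) ^ 2 - 1) * uhat H * uhat K * (uhat H ^ 2 - (tc : ℂ) * Z0hat H * Z1hat K))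
    :
    ∀ u v : ℂ,
      Summable (fun pq : ℕ × ℕ => ‖(z pq.1 pq.2 : ℂ) * u ^ pq.1 * v ^ pq.2‖) ↔
        (‖u‖ ≤ uc ∧ ‖v‖ ≤ uc) := by
  set ε := min ρ 1 / 2 with hεdef
  have hε : 0 < ε := half_pos (lt_min hρ one_pos)
  have hερ : ε < ρ := (half_lt_self (lt_min hρ one_pos)).trans_le (min_le_left _ _)
  have hε1 : ε < 1 := (half_lt_self (lt_min hρ one_pos)).trans_le (min_le_right _ _)
  have hnorm : ∀ h : ℝ, 0 ≤ h → h < ε → ‖(h : ℂ)‖ < ρ := fun h h0 hh => by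
    rw [Complex.norm_real, Real.norm_of_nonneg h0]
    exact hh.trans hερ
  have hreal : ∀ H K : ℝ, 0 ≤ H → H < ε → 0 ≤ K → K < ε → ∃ Z : ℝ,
      HasSum (fun pq : ℕ × ℕ => z pq.1 pq.2 * uReal H ^ pq.1 * uReal K ^ pq.2) Z ∧
      (nuc * uReal K * uReal H - uReal H ^ 2
          - (nuc ^ 2 - 1) * tc * uReal K * (Z0Real H + uReal H * Z1Real K)) * (Z - Z0Real K)
        = uReal H ^ 2 * (Z0Real K - Z0Real H)
          + (nuc ^ 2 - 1) * uReal H * uReal K * (uReal H ^ 2 - tc * Z0Real H * Z1Real K) := by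
    intro H K hH0 hH hK0 hK
    obtain ⟨Z, hZsum, hZeq⟩ := hZ H K (hnorm H hH0 hH) (hnorm K hK0 hK)
    simp only [uhat_ofReal, Z0hat_ofReal, Z1hat_ofReal] at hZsum hZeq
    have hsum : Summable fun pq : ℕ × ℕ => z pq.1 pq.2 * uReal H ^ pq.1 * uReal K ^ pq.2 :=
      Complex.summable_ofReal.mp (by simpa using hZsum.summable)
    have hZreal := hZsum.unique (by simpa using Complex.hasSum_ofReal.mpr hsum.hasSum)
    rw [hZreal] at hZeq
    exact ⟨_, hsum.hasSum, by exact_mod_cast hZeq⟩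
  have hleft : ∀ h ∈ Ioo (0 : ℝ) ε, HasSum (fun p => z p 0 * uReal h ^ p) (Z0Real h) := by
    intro h hh
    have := hz0 h (hnorm h hh.1.le hh.2)
    rw [uhat_ofReal, Z0hat_ofReal] at this
    exact_mod_cast this
  have hright : ∀ h ∈ Ioo (0 : ℝ) ε, HasSum (fun q => z 0 q * uReal h ^ q) (Z0Real h) := by
    intro h hh
    obtain ⟨Z, hsum, heq⟩ := hreal 0 h le_rfl hε hh.1.le hh.2
    have hu0 : uReal 0 = 0 := by simp [uReal]
    have hZ00 : Z0Real 0 = 1 := by norm_num [Z0Real]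
    have hpos := mul_pos uc_pos (uReal_pos hh.1 (by linarith [hh.2]))
    simp only [hu0, hZ00] at hsum heq
    rw [nuc_sq_sub_one_mul_tc] at heq
    have hZ0 : Z = Z0Real h := by
      refine sub_eq_zero.mp ((mul_eq_zero.mp ?_).resolve_left hpos.ne')
      linear_combination -(3 / 10) * heq
    rw [hZ0] at hsum
    have hinj : Function.Injective fun q : ℕ => ((0 : ℕ), q) := Prod.mk_right_injective 0
    have := (hinj.hasSum_iff (f := fun pq : ℕ × ℕ => z pq.1 pq.2 * 0 ^ pq.1 * uReal h ^ pq.2)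
      (fun pq hpq => ?_)).mpr hsum
    · simpa [Function.comp_def] using this
    · have : pq.1 ≠ 0 := fun h0 => hpq ⟨pq.2, Prod.ext h0.symm rfl⟩
      simp [this]
  have hsmall : ∀ H ∈ Ioo (0 : ℝ) ε, ∀ K ∈ Ioo (0 : ℝ) ε,
      HasSum (fun pq : ℕ × ℕ => z pq.1 pq.2 * uReal H ^ pq.1 * uReal K ^ pq.2) (ZReal H K) := by
    intro H hH K hK
    obtain ⟨Z, hsum, heq⟩ := hreal H K hH.1.le hH.2 hK.1.le hK.2
    rwa [← eq_ZReal_of_kernel_equation ⟨hH.1, hH.2.trans hε1⟩ ⟨hK.1, hK.2.trans hε1⟩ heq]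
  have hdiag := hasSum_uReal_of_small hz_nonneg hε hε1 hsmall
  intro u v
  have hnormterm : ∀ pq : ℕ × ℕ, ‖(z pq.1 pq.2 : ℂ) * u ^ pq.1 * v ^ pq.2‖
      = z pq.1 pq.2 * ‖u‖ ^ pq.1 * ‖v‖ ^ pq.2 := fun pq => by
    rw [norm_mul, norm_mul, norm_pow, norm_pow, Complex.norm_real,
      Real.norm_of_nonneg (hz_nonneg _ _)]
  simp only [hnormterm]
  constructor
  · intro hs
    refine ⟨le_uc_of_summable (fun p => hz_nonneg p 0) hε hε1 hleft ?_,
      le_uc_of_summable (fun q => hz_nonneg 0 q) hε hε1 hright ?_⟩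
    · simpa [Function.comp_def] using hs.comp_injective (Prod.mk_left_injective (0 : ℕ))
    · simpa [Function.comp_def] using hs.comp_injective (Prod.mk_right_injective (0 : ℕ))
  · rintro ⟨hu, hv⟩
    refine (summable_at_uc hz_nonneg hdiag).of_nonneg_of_le (fun pq => ?_) fun pq => ?_
    · have := hz_nonneg pq.1 pq.2
      positivity
    · have := hz_nonneg pq.1 pq.2
      have := uc_pos
      gcongr
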